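/- Slater's identity: as formal power series (or for |q| < 1), (q; q)_∞ · ∑_{n ≥ 0} q^{2n(n+1)} / (q; q)_{2n+1} = (q³; q⁸)_∞ (q⁵; q⁸)_∞ (q⁸; q⁸)_∞ (q²; q¹⁶)_∞ (q¹⁴; q¹⁶)_∞. -/

import Mathlib

/-!
Put `x = q ^ (1/2)`. Since `2n(n+1) = ((2n+1)² - 1) / 2`, the series on the left consists of the
odd-index terms of Euler's expansion `∏ (1 + z x ^ (2k+1)) = ∑ x ^ (n²) z ^ n / (q; q)_n`, so that
`2 x ∑ q ^ (2n(n+1)) / (q; q)_{2n+1} = ∏ (1 + x ^ (2k+1)) - ∏ (1 - x ^ (2k+1))`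
(`euler_odd_part`). After multiplication by `(q; q)_∞` the two products become `(-x; -x)_∞` and
`(x; x)_∞`, and by the pentagonal number theorem their difference is twice the negative of the part
of the pentagonal series with odd exponents in `x`. Odd pentagonal exponents come from `j ≡ 2, 3 mod 4`
(`pentagonal_odd_part`), which turns the left-hand side of the identity into
`T = ∑ q ^ (12a² + 5a) - ∑ q ^ (12a² + 13a + 3)`, both sums over `ℤ`.

The right-hand side multiplied by `(q¹⁶; q¹⁶)_∞` is, by Jacobi's triple product, a product of the
two theta series `∑ (-1)ⁿ q ^ (4n² - n)` and `∑ (-1)ᵐ q ^ (8m² + 6m)`. The identity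
`3 (n² + 2m²) = (n + 2m)² + 2 (n - m)²` separates the variables on each residue class of `n - m`
modulo `3`; two classes give the two sums in `T`, each multiplied by `(q¹⁶; q¹⁶)_∞`, and the third
vanishes by antisymmetry (`theta_mul_theta`, the quintuple product identity in disguise).
Cancelling `(q¹⁶; q¹⁶)_∞ ≠ 0` finishes the proof.

Euler's expansion and Jacobi's triple product are both obtained from Rothe's finite `q`-binomial
theorem (`rothe`) by dominated convergence, using that Gaussian binomials are uniformly bounded for
`‖q‖ < 1`. Square roots are chosen through `y` with `y ^ 4 = q`, so that `x = y ^ 2`, and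
`-x = (I y) ^ 2`.
-/

open Filter Topology

/-! ### Pochhammer symbols and Gaussian binomials -/

/-- The finite `q`-Pochhammer symbol `(q; q)_n`. -/
noncomputable def qP (q : ℂ) (n : ℕ) : ℂ := ∏ k ∈ Finset.range n, (1 - q ^ (k + 1))

/-- The Gaussian binomial coefficient, as a quotient of `q`-Pochhammer symbols, extended by `0`
to `j > n`. -/
noncomputable def qBinom (q : ℂ) (n j : ℕ) : ℂ :=
  if j ≤ n then qP q n / (qP q j * qP q (n - j)) else 0

lemma qP_succ (q : ℂ) (n : ℕ) : qP q (n + 1) = qP q n * (1 - q ^ (n + 1)) :=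
  Finset.prod_range_succ _ _

lemma one_sub_pow_ne_zero {q : ℂ} (hq : ‖q‖ < 1) (n : ℕ) : 1 - q ^ (n + 1) ≠ 0 := by
  intro h
  have h1 : ‖q ^ (n + 1)‖ < 1 := by
    rw [norm_pow]; exact pow_lt_one₀ (norm_nonneg _) hq (by omega)
  rw [← sub_eq_zero.1 h] at h1
  simp at h1

lemma qP_ne_zero {q : ℂ} (hq : ‖q‖ < 1) (n : ℕ) : qP q n ≠ 0 :=
  Finset.prod_ne_zero_iff.2 fun k _ => one_sub_pow_ne_zero hq k

lemma summable_mul_pow {q : ℂ} (hq : ‖q‖ < 1) (c : ℂ) : Summable fun k : ℕ => ‖c * q ^ k‖ := by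
  simp only [norm_mul, norm_pow]
  exact (summable_geometric_of_lt_one (norm_nonneg _) hq).mul_left _

lemma multipliable_one_add_mul_pow {q : ℂ} (hq : ‖q‖ < 1) (c : ℂ) :
    Multipliable fun k : ℕ => 1 + c * q ^ k :=
  multipliable_one_add_of_summable (summable_mul_pow hq c)

lemma multipliable_qP {q : ℂ} (hq : ‖q‖ < 1) : Multipliable fun k : ℕ => 1 - q ^ (k + 1) := by
  refine (multipliable_one_add_mul_pow hq (-q)).congr fun k => ?_
  ring

lemma tprod_qP_ne_zero {q : ℂ} (hq : ‖q‖ < 1) : ∏' k : ℕ, (1 - q ^ (k + 1)) ≠ 0 := by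
  have h := tprod_one_add_ne_zero_of_summable (R := ℂ) (f := fun k : ℕ => -q * q ^ k)
    (fun k => by
      have := one_sub_pow_ne_zero hq k
      intro h; apply this; rw [← h]; ring) (summable_mul_pow hq (-q))
  intro h'
  apply h
  rw [← h']
  exact tprod_congr fun k => by ring

lemma tendsto_qP {q : ℂ} (hq : ‖q‖ < 1) :
    Tendsto (qP q) atTop (𝓝 (∏' k : ℕ, (1 - q ^ (k + 1)))) :=
  (multipliable_qP hq).tendsto_prod_tprod_nat

lemma exists_qBinom_bound {q : ℂ} (hq : ‖q‖ < 1) : ∃ C : ℝ, ∀ n j, ‖qBinom q n j‖ ≤ C := by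
  obtain ⟨A, hA⟩ := (Metric.isBounded_range_of_tendsto _ (tendsto_qP hq)).exists_norm_le
  obtain ⟨B, hB⟩ := (Metric.isBounded_range_of_tendsto _
    ((tendsto_qP hq).inv₀ (tprod_qP_ne_zero hq))).exists_norm_le
  have hA' : ∀ n, ‖qP q n‖ ≤ A := fun n => hA _ ⟨n, rfl⟩
  have hB' : ∀ n, ‖(qP q n)⁻¹‖ ≤ B := fun n => hB _ ⟨n, rfl⟩
  have hA0 : 0 ≤ A := (norm_nonneg _).trans (hA' 0)
  have hB0 : 0 ≤ B := (norm_nonneg _).trans (hB' 0)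
  refine ⟨A * (B * B), fun n j => ?_⟩
  unfold qBinom
  split_ifs
  · rw [div_eq_mul_inv, mul_inv, norm_mul, norm_mul]
    gcongr
    exacts [hA' _, hB' _, hB' _]
  · simp; positivity

lemma qBinom_zero_right {q : ℂ} (hq : ‖q‖ < 1) (n : ℕ) : qBinom q n 0 = 1 := by
  simp only [qBinom, Nat.zero_le, if_true, Nat.sub_zero]
  have := qP_ne_zero hq n
  rw [show qP q 0 = 1 from rfl, one_mul, div_self this]

lemma qBinom_self {q : ℂ} (hq : ‖q‖ < 1) (n : ℕ) : qBinom q n n = 1 := by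
  have := qP_ne_zero hq n
  simp only [qBinom, le_refl, if_true, Nat.sub_self]
  rw [show qP q 0 = 1 from rfl, mul_one, div_self this]

/-- The `q`-Pascal rule. -/
lemma qBinom_succ_succ {q : ℂ} (hq : ‖q‖ < 1) {n j : ℕ} (hj : j ≤ n) :
    qBinom q (n + 1) (j + 1) = qBinom q n (j + 1) + q ^ (n - j) * qBinom q n j := by
  obtain ⟨m, rfl⟩ := Nat.exists_eq_add_of_le hj
  rcases m with _ | m
  · simp only [Nat.add_zero, Nat.sub_self, pow_zero, one_mul]
    rw [qBinom_self hq, qBinom_self hq]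
    simp [qBinom]
  · have e1 : j + (m + 1) + 1 - (j + 1) = m + 1 := by omega
    have e2 : j + (m + 1) - (j + 1) = m := by omega
    have e3 : j + (m + 1) - j = m + 1 := by omega
    simp only [qBinom, e1, e2, e3, show j + 1 ≤ j + (m + 1) + 1 by omega,
      show j + 1 ≤ j + (m + 1) by omega, hj, if_true]
    rw [qP_succ q (j + (m + 1)), qP_succ q j, qP_succ q m]
    have h1 := qP_ne_zero hq j
    have h2 := qP_ne_zero hq m
    have h3 := one_sub_pow_ne_zero hq j
    have h4 := one_sub_pow_ne_zero hq m
    field_simp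
    ring

/-- Rothe's finite `q`-binomial theorem, with base `x ^ 2`. -/
lemma rothe {x : ℂ} (hx : ‖x ^ 2‖ < 1) (z : ℂ) (n : ℕ) :
    ∏ k ∈ Finset.range n, (1 + z * x ^ (2 * k + 1)) =
      ∑ j ∈ Finset.range (n + 1), qBinom (x ^ 2) n j * x ^ (j ^ 2) * z ^ j := by
  induction n with
  | zero => simp [qBinom_self hx]
  | succ n ih =>
    rw [Finset.prod_range_succ, ih, mul_add, mul_one, Finset.sum_range_succ' _ (n + 1)]
    have h1 : ∑ j ∈ Finset.range (n + 1), qBinom (x ^ 2) n j * x ^ (j ^ 2) * z ^ j =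
        ∑ j ∈ Finset.range (n + 1),
          qBinom (x ^ 2) n (j + 1) * x ^ ((j + 1) ^ 2) * z ^ (j + 1) + 1 := by
      have : qBinom (x ^ 2) n (n + 1) = 0 := by simp [qBinom]
      rw [Finset.sum_range_succ', Finset.sum_range_succ _ n, this, qBinom_zero_right hx]
      simp
    nth_rewrite 1 [h1]
    rw [Finset.sum_mul, qBinom_zero_right hx, add_right_comm, ← Finset.sum_add_distrib]
    congr 1
    · refine Finset.sum_congr rfl fun j hj => ?_
      have hj' : j ≤ n := by simpa [Nat.lt_succ_iff] using hj
      rw [qBinom_succ_succ hx hj']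
      obtain ⟨m, rfl⟩ := Nat.exists_eq_add_of_le hj'
      rw [Nat.add_sub_cancel_left]
      ring
    · simp

lemma norm_sq_lt {x : ℂ} (hx : ‖x‖ < 1) : ‖x ^ 2‖ < 1 := by
  rw [norm_pow]; exact pow_lt_one₀ (norm_nonneg _) hx two_ne_zero

/-! ### Euler's expansion and Jacobi's triple product -/

lemma multipliable_theta {x : ℂ} (hx : ‖x‖ < 1) (z : ℂ) :
    Multipliable fun k : ℕ => 1 + z * x ^ (2 * k + 1) := by
  refine (multipliable_one_add_mul_pow (norm_sq_lt hx) (z * x)).congr fun k => ?_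
  ring

lemma summable_theta_nat {x : ℂ} (hx0 : x ≠ 0) (hx : ‖x‖ < 1) {z : ℂ} (hz : z ≠ 0) :
    Summable fun n : ℕ => ‖x ^ (n ^ 2) * z ^ n‖ := by
  refine summable_of_ratio_test_tendsto_lt_one (l := 0) one_pos
    (.of_forall fun n => norm_ne_zero_iff.2 (mul_ne_zero (pow_ne_zero _ hx0) (pow_ne_zero _ hz))) ?_
  have h1 : Tendsto (fun n : ℕ => (‖x‖ * ‖z‖) * (‖x‖ ^ 2) ^ n) atTop (𝓝 ((‖x‖ * ‖z‖) * 0)) :=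
    (tendsto_pow_atTop_nhds_zero_of_lt_one (by positivity)
      (pow_lt_one₀ (norm_nonneg _) hx two_ne_zero)).const_mul _
  rw [mul_zero] at h1
  refine h1.congr fun n => ?_
  have hx' : ‖x‖ ≠ 0 := norm_ne_zero_iff.2 hx0
  have hz' : ‖z‖ ≠ 0 := norm_ne_zero_iff.2 hz
  simp only [norm_mul, norm_pow, norm_norm]
  rw [eq_div_iff (by positivity)]
  ring

lemma summable_theta {x : ℂ} (hx0 : x ≠ 0) (hx : ‖x‖ < 1) {z : ℂ} (hz : z ≠ 0) :
    Summable fun n : ℤ => ‖x ^ (n ^ 2) * z ^ n‖ := by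
  refine Summable.of_nat_of_neg ((summable_theta_nat hx0 hx hz).congr fun n => ?_)
    ((summable_theta_nat hx0 hx (inv_ne_zero hz)).congr fun n => ?_)
  · rw [← Nat.cast_pow, zpow_natCast, zpow_natCast]
  · rw [neg_sq, ← Nat.cast_pow, zpow_natCast, zpow_neg, zpow_natCast, inv_pow]

/-- Euler's expansion `∏ (1 + z x ^ (2k+1)) = ∑ x ^ (n²) z ^ n / (x²; x²)_n`, the limit `n → ∞`
of Rothe's theorem. -/
lemma euler_expansion {x : ℂ} (hx0 : x ≠ 0) (hx : ‖x‖ < 1) {z : ℂ} (hz : z ≠ 0) :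
    Summable (fun n : ℕ => x ^ (n ^ 2) * z ^ n / qP (x ^ 2) n) ∧
    ∏' k : ℕ, (1 + z * x ^ (2 * k + 1)) = ∑' n : ℕ, x ^ (n ^ 2) * z ^ n / qP (x ^ 2) n := by
  have hq := norm_sq_lt hx
  obtain ⟨C, hC⟩ := exists_qBinom_bound hq
  have hlim (j : ℕ) : Tendsto (fun n => qBinom (x ^ 2) n j * x ^ (j ^ 2) * z ^ j) atTop
      (𝓝 (x ^ (j ^ 2) * z ^ j / qP (x ^ 2) j)) := by
    have hP := tendsto_qP hq
    have h0 := tprod_qP_ne_zero hq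
    have h1 : Tendsto (fun n => qP (x ^ 2) n / (qP (x ^ 2) j * qP (x ^ 2) (n - j))) atTop
        (𝓝 ((∏' k : ℕ, (1 - (x ^ 2) ^ (k + 1))) /
          (qP (x ^ 2) j * ∏' k : ℕ, (1 - (x ^ 2) ^ (k + 1))))) :=
      hP.div ((hP.comp (tendsto_sub_atTop_nat j)).const_mul _)
        (mul_ne_zero (qP_ne_zero hq j) h0)
    have h2 := (h1.mul_const (x ^ (j ^ 2))).mul_const (z ^ j)
    have h3 := qP_ne_zero hq j
    rw [show x ^ (j ^ 2) * z ^ j / qP (x ^ 2) j = (∏' k : ℕ, (1 - (x ^ 2) ^ (k + 1))) /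
          (qP (x ^ 2) j * ∏' k : ℕ, (1 - (x ^ 2) ^ (k + 1))) * x ^ (j ^ 2) * z ^ j by field_simp]
    refine h2.congr' ?_
    filter_upwards [eventually_ge_atTop j] with n hn
    simp [qBinom, hn]
  have hbd (n j : ℕ) : ‖qBinom (x ^ 2) n j * x ^ (j ^ 2) * z ^ j‖ ≤
      C * ‖x ^ (j ^ 2) * z ^ j‖ := by
    rw [mul_assoc, norm_mul]
    gcongr
    exact hC n j
  have hsum := (summable_theta_nat hx0 hx hz).mul_left C
  have hT := tendsto_tsum_of_dominated_convergence hsum hlim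
    (.of_forall fun n j => hbd n j)
  refine ⟨Summable.of_norm_bounded hsum fun j =>
    le_of_tendsto (hlim j).norm (.of_forall fun n => hbd n j), ?_⟩
  refine tendsto_nhds_unique (multipliable_theta hx z).tendsto_prod_tprod_nat (hT.congr fun n => ?_)
  rw [rothe hq]
  refine tsum_eq_sum fun j hj => ?_
  have : ¬ j ≤ n := by simpa [Nat.lt_succ_iff] using hj
  simp [qBinom, this]

/-- The finite form of Jacobi's triple product: Rothe's theorem with `2n` factors and `z`
replaced by `z / x ^ (2n)`. -/
lemma finite_jacobi {x : ℂ} (hx0 : x ≠ 0) (hx : ‖x‖ < 1) {z : ℂ} (hz : z ≠ 0) (n : ℕ) :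
    (∏ k ∈ Finset.range n, (1 + z * x ^ (2 * k + 1))) *
      ∏ k ∈ Finset.range n, (1 + z⁻¹ * x ^ (2 * k + 1)) =
    ∑ i ∈ Finset.range (2 * n + 1),
      qBinom (x ^ 2) (2 * n) i * (x ^ (((i : ℤ) - n) ^ 2) * z ^ ((i : ℤ) - n)) := by
  have h := rothe (norm_sq_lt hx) (z * (x ^ (2 * n))⁻¹) (2 * n)
  have h1 : ∏ k ∈ Finset.range (2 * n), (1 + z * (x ^ (2 * n))⁻¹ * x ^ (2 * k + 1)) =
      (z ^ n * (x ^ (n ^ 2))⁻¹) * ((∏ k ∈ Finset.range n, (1 + z * x ^ (2 * k + 1))) *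
      ∏ k ∈ Finset.range n, (1 + z⁻¹ * x ^ (2 * k + 1))) := by
    rw [two_mul n, Finset.prod_range_add,
      ← Finset.prod_range_reflect (fun k => 1 + z * (x ^ (n + n))⁻¹ * x ^ (2 * k + 1)) n]
    have e1 : ∏ k ∈ Finset.range n, (1 + z * (x ^ (n + n))⁻¹ * x ^ (2 * (n + k) + 1)) =
        ∏ k ∈ Finset.range n, (1 + z * x ^ (2 * k + 1)) := by
      refine Finset.prod_congr rfl fun k _ => ?_
      field_simp
      ring
    have e2 : ∏ k ∈ Finset.range n, (z * (x ^ (2 * k + 1))⁻¹) = z ^ n * (x ^ (n ^ 2))⁻¹ := by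
      clear h e1
      induction n with
      | zero => simp
      | succ n ih =>
        rw [Finset.prod_range_succ, ih]
        field_simp
        ring
    have e3 : ∏ k ∈ Finset.range n,
        (1 + z * (x ^ (n + n))⁻¹ * x ^ (2 * (n - 1 - k) + 1)) =
        (∏ k ∈ Finset.range n, (z * (x ^ (2 * k + 1))⁻¹)) *
          ∏ k ∈ Finset.range n, (1 + z⁻¹ * x ^ (2 * k + 1)) := by
      rw [← Finset.prod_mul_distrib]
      refine Finset.prod_congr rfl fun k hk => ?_
      obtain ⟨m, rfl⟩ := Nat.exists_eq_add_of_lt (Finset.mem_range.1 hk)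
      rw [show k + m + 1 - 1 - k = m by omega]
      field_simp
      ring
    rw [e1, e3, e2]
    ring
  rw [h1] at h
  have h2 : z ^ n * (x ^ (n ^ 2))⁻¹ ≠ 0 := by positivity
  apply mul_left_cancel₀ h2
  rw [h, Finset.mul_sum]
  refine Finset.sum_congr rfl fun i _ => ?_
  have e4 : x ^ (((i : ℤ) - n) ^ 2) = x ^ (i ^ 2) * x ^ (n ^ 2) * (x ^ (2 * n * i))⁻¹ := by
    rw [show ((i : ℤ) - n) ^ 2 = ((i ^ 2 : ℕ) : ℤ) + ((n ^ 2 : ℕ) : ℤ) - ((2 * n * i : ℕ) : ℤ) by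
      push_cast; ring, zpow_sub₀ hx0, zpow_add₀ hx0]
    simp only [zpow_natCast, div_eq_mul_inv]
  rw [e4, zpow_sub₀ hz, zpow_natCast, zpow_natCast, mul_pow, inv_pow, ← pow_mul]
  field_simp

/-- **Jacobi's triple product**, the limit of `finite_jacobi`. -/
lemma jacobi_triple {x : ℂ} (hx0 : x ≠ 0) (hx : ‖x‖ < 1) {z : ℂ} (hz : z ≠ 0) :
    (∏' k : ℕ, (1 - (x ^ 2) ^ (k + 1))) * ((∏' k : ℕ, (1 + z * x ^ (2 * k + 1))) *
      ∏' k : ℕ, (1 + z⁻¹ * x ^ (2 * k + 1))) = ∑' j : ℤ, x ^ (j ^ 2) * z ^ j := by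
  have hq := norm_sq_lt hx
  obtain ⟨C, hC⟩ := exists_qBinom_bound hq
  have h0 := tprod_qP_ne_zero hq
  set P := ∏' k : ℕ, (1 - (x ^ 2) ^ (k + 1)) with hPdef
  have hP : Tendsto (qP (x ^ 2)) atTop (𝓝 P) := tendsto_qP hq
  -- The guard is needed because `toNat` would send every `j < -n` to the index `0`.
  let c : ℕ → ℤ → ℂ := fun n j => if -(n : ℤ) ≤ j then qBinom (x ^ 2) (2 * n) (j + n).toNat else 0
  have hlimc (j : ℤ) : Tendsto (fun n => c n j) atTop (𝓝 P⁻¹) := by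
    have t1 : Tendsto (fun n : ℕ => 2 * n) atTop atTop :=
      tendsto_atTop_mono (fun n => by simp only [id]; omega) tendsto_id
    have t2 : Tendsto (fun n : ℕ => (j + n).toNat) atTop atTop :=
      tendsto_atTop_mono (fun n => by omega) (tendsto_sub_atTop_nat j.natAbs)
    have t3 : Tendsto (fun n : ℕ => 2 * n - (j + n).toNat) atTop atTop :=
      tendsto_atTop_mono (fun n => by omega) (tendsto_sub_atTop_nat j.natAbs)
    have h1 := (hP.comp t1).div ((hP.comp t2).mul (hP.comp t3)) (mul_ne_zero h0 h0)
    rw [show P / (P * P) = P⁻¹ by field_simp] at h1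
    refine h1.congr' ?_
    filter_upwards [eventually_ge_atTop j.natAbs] with n hn
    have a1 : -(n : ℤ) ≤ j := by omega
    have a2 : (j + n).toNat ≤ 2 * n := by omega
    simp only [c, qBinom, a1, a2, if_true, Pi.div_apply, Function.comp_apply]
  have hbc (n : ℕ) (j : ℤ) : ‖c n j‖ ≤ C := by
    simp only [c]
    split_ifs
    · exact hC _ _
    · simpa using (norm_nonneg _).trans (hC 0 0)
  have hT := tendsto_tsum_of_dominated_convergence (𝓕 := atTop)
    (f := fun n j => c n j * (x ^ (j ^ 2) * z ^ j)) ((summable_theta hx0 hx hz).mul_left C)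
    (fun j => (hlimc j).mul_const _)
    (.of_forall fun n j => by
      rw [norm_mul]
      gcongr
      exact hbc n j)
  rw [tsum_mul_left] at hT
  have hT' := ((multipliable_theta hx z).tendsto_prod_tprod_nat.mul
    (multipliable_theta hx z⁻¹).tendsto_prod_tprod_nat)
  have key := tendsto_nhds_unique hT' (hT.congr fun n => ?_)
  · rw [key, mul_inv_cancel_left₀ h0]
  rw [finite_jacobi hx0 hx hz, tsum_eq_sum (s := Finset.Icc (-(n : ℤ)) n)]
  · symm
    refine Finset.sum_nbij' (fun i : ℕ => (i : ℤ) - n) (fun j : ℤ => (j + n).toNat) ?_ ?_ ?_ ?_ ?_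
    · intro i hi
      simp only [Finset.mem_range, Finset.mem_Icc] at *
      omega
    · intro i hi
      simp only [Finset.mem_range, Finset.mem_Icc] at *
      omega
    · intro i hi
      simp
    · intro i hi
      simp only [Finset.mem_Icc] at *
      omega
    · intro i hi
      simp [c]
  · intro j hj
    simp only [Finset.mem_Icc, not_and_or, not_le] at hj
    rcases hj with hj | hj
    · have : ¬ -(n : ℤ) ≤ j := by omega
      simp [c, this]
    · have : ¬ (j + n).toNat ≤ 2 * n := by omega
      simp only [c, qBinom, this, if_false, ite_self, zero_mul]

/-! ### The pentagonal number theorem -/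

lemma norm_pow_lt {q : ℂ} (hq : ‖q‖ < 1) {a : ℕ} (ha : a ≠ 0) : ‖q ^ a‖ < 1 := by
  rw [norm_pow]; exact pow_lt_one₀ (norm_nonneg _) hq ha

lemma theta_term {q : ℂ} (hq0 : q ≠ 0) (a : ℕ) (b j : ℤ) :
    (q ^ a) ^ (j ^ 2) * (-q ^ b) ^ j = (-1) ^ j * q ^ (a * j ^ 2 + b * j) := by
  rw [zpow_add₀ hq0, zpow_mul, zpow_mul, zpow_natCast, neg_eq_neg_one_mul, mul_zpow]
  ring

lemma summable_theta_neg {q : ℂ} (hq0 : q ≠ 0) (hq : ‖q‖ < 1) {a : ℕ} (ha : a ≠ 0) (b : ℤ) :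
    Summable fun j : ℤ => ‖(-1) ^ j * q ^ (a * j ^ 2 + b * j)‖ :=
  (summable_theta (pow_ne_zero a hq0) (norm_pow_lt hq ha) (neg_ne_zero.2 (zpow_ne_zero b hq0))).congr
    fun j => by rw [theta_term hq0]

/-- Jacobi's triple product at `x = q ^ a`, `z = -q ^ b`. -/
lemma jacobi_neg {q : ℂ} (hq0 : q ≠ 0) (hq : ‖q‖ < 1) {a : ℕ} (ha : a ≠ 0) (b : ℤ) :
    (∏' k : ℕ, (1 - (q ^ (2 * a)) ^ (k + 1))) * ((∏' k : ℕ, (1 - q ^ b * q ^ (a * (2 * k + 1)))) *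
      ∏' k : ℕ, (1 - q ^ (-b) * q ^ (a * (2 * k + 1)))) =
    ∑' j : ℤ, (-1) ^ j * q ^ (a * j ^ 2 + b * j) := by
  have h := jacobi_triple (pow_ne_zero a hq0) (norm_pow_lt hq ha)
    (neg_ne_zero.2 (zpow_ne_zero b hq0))
  simp only [theta_term hq0] at h
  rw [← h]
  congr 1
  · exact tprod_congr fun k => by ring
  · congr 1
    · exact tprod_congr fun k => by ring
    · refine tprod_congr fun k => ?_
      rw [zpow_neg, inv_neg]
      ring

lemma tprod_mod_three {f : ℕ → ℂ} (hf : Multipliable f) (h0 : Multipliable fun k => f (3 * k))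
    (h1 : Multipliable fun k => f (3 * k + 1)) (h2 : Multipliable fun k => f (3 * k + 2)) :
    ∏' k, f k = (∏' k, f (3 * k)) * (∏' k, f (3 * k + 1)) * ∏' k, f (3 * k + 2) := by
  have t : Tendsto (fun n : ℕ => 3 * n) atTop atTop :=
    tendsto_atTop_mono (fun n => by simp only [id]; omega) tendsto_id
  refine tendsto_nhds_unique (hf.tendsto_prod_tprod_nat.comp t)
    (((h0.tendsto_prod_tprod_nat.mul h1.tendsto_prod_tprod_nat).mul
      h2.tendsto_prod_tprod_nat).congr fun n => ?_)
  simp only [Function.comp_apply]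
  induction n with
  | zero => simp
  | succ n ih =>
    rw [show 3 * (n + 1) = 3 * n + 1 + 1 + 1 by ring]
    simp only [Finset.prod_range_succ]
    rw [← ih]
    ring

lemma multipliable_one_sub_mul_pow {q : ℂ} (hq : ‖q‖ < 1) (c : ℂ) :
    Multipliable fun k : ℕ => 1 - c * q ^ k :=
  (multipliable_one_add_mul_pow hq (-c)).congr fun k => by ring

/-- Euler's pentagonal number theorem, in base `y ^ 2`. -/
lemma pentagonal_theorem {y : ℂ} (hy0 : y ≠ 0) (hy : ‖y‖ < 1) :
    ∏' k : ℕ, (1 - (y ^ 2) ^ (k + 1)) = ∑' j : ℤ, (-1) ^ j * y ^ (3 * j ^ 2 + j) := by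
  have h := jacobi_neg hy0 hy (a := 3) (by norm_num) 1
  have h6 := norm_pow_lt hy (a := 6) (by norm_num)
  have e (c : ℂ) (r : ℕ) (hr : c = y ^ (2 * (r + 1))) (k : ℕ) :
      1 - c * (y ^ 6) ^ k = 1 - (y ^ 2) ^ (3 * k + r + 1) := by
    rw [hr]; ring
  rw [tprod_mod_three (multipliable_qP (norm_sq_lt hy))
    ((multipliable_one_sub_mul_pow h6 _).congr (e _ 0 rfl))
    ((multipliable_one_sub_mul_pow h6 _).congr (e _ 1 rfl))
    ((multipliable_one_sub_mul_pow h6 _).congr (e _ 2 rfl))]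
  simp only [Nat.cast_ofNat, one_mul] at h
  rw [← h, mul_comm]
  congr 1
  · exact tprod_congr fun k => by ring
  · rw [mul_comm]
    congr 1
    · exact tprod_congr fun k => by rw [zpow_one]; ring
    · refine tprod_congr fun k => ?_
      rw [zpow_neg, zpow_one]
      field_simp
      ring

lemma tsum_int_mod (N : ℕ) [NeZero N] {f : ℤ → ℂ} (hf : Summable f) :
    ∑' j, f j = ∑ r : Fin N, ∑' b : ℤ, f (b * N + r) := by
  have hs : Summable fun p : ℤ × Fin N => f (p.1 * N + p.2) :=
    (Int.divModEquiv N).symm.summable_iff.2 hf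
  rw [← (Int.divModEquiv N).symm.tsum_eq f]
  rw [show (∑' p, f ((Int.divModEquiv N).symm p)) = ∑' p : ℤ × Fin N, f (p.1 * N + p.2) from rfl,
    ← (Equiv.prodComm (Fin N) ℤ).tsum_eq]
  exact (Summable.tsum_prod ((Equiv.prodComm (Fin N) ℤ).summable_iff.2 hs)).trans (tsum_fintype _)

lemma neg_one_zpow_add_two_mul (a c : ℤ) : (-1 : ℂ) ^ (2 * a + c) = (-1) ^ c := by
  rw [zpow_add₀ (by norm_num), zpow_mul]
  norm_num

/-! ### The product of two theta series -/

/-- In the coordinates `n = a + 2b + r`, `m = a - b` the quadratic form `4n² + 8m²` has no mixed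
term, so the general term of the product of two theta series factors. -/
lemma quintuple_term {q : ℂ} (hq0 : q ≠ 0) (a b r : ℤ) :
    ((-1) ^ (a - b + (b * 3 + r)) *
        q ^ (4 * (a - b + (b * 3 + r)) ^ 2 + -1 * (a - b + (b * 3 + r)))) *
      ((-1) ^ (a - b) * q ^ (8 * (a - b) ^ 2 + 6 * (a - b))) =
    (-1) ^ r * ((-1) ^ b * q ^ (24 * b ^ 2 + (16 * r - 8) * b)) *
      q ^ (12 * a ^ 2 + (8 * r + 5) * a + (4 * r ^ 2 - r)) := by
  have h1 : (-1 : ℂ) ^ (a - b + (b * 3 + r)) * (-1) ^ (a - b) = (-1) ^ r * (-1) ^ b := by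
    rw [← zpow_add₀ (by norm_num), ← zpow_add₀ (by norm_num),
      ← neg_one_zpow_add_two_mul a (r + b)]
    congr 1
    ring
  rw [mul_mul_mul_comm, h1, mul_assoc, mul_assoc, mul_assoc, ← zpow_add₀ hq0, ← zpow_add₀ hq0]
  congr 3
  ring

/-- The quintuple product identity at one value of its parameter: the product of two theta series is split
according to the residue of the difference of the summation indices modulo `3`. -/
lemma theta_mul_theta {q : ℂ} (hq0 : q ≠ 0) (hq : ‖q‖ < 1) :
    (∑' n : ℤ, (-1) ^ n * q ^ (4 * n ^ 2 + -1 * n)) * (∑' m : ℤ, (-1) ^ m * q ^ (8 * m ^ 2 + 6 * m))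
    = (∏' k : ℕ, (1 - (q ^ 16) ^ (k + 1))) *
      ((∑' a : ℤ, q ^ (12 * a ^ 2 + 5 * a)) - ∑' a : ℤ, q ^ (12 * a ^ 2 + 13 * a + 3)) := by
  have hA := summable_theta_neg hq0 hq (a := 4) (by norm_num) (-1)
  have hB := summable_theta_neg hq0 hq (a := 8) (by norm_num) 6
  simp only [Nat.cast_ofNat] at hA hB
  rw [tsum_mul_tsum_of_summable_norm hA hB]
  have hAB := summable_mul_of_summable_norm hA hB
  -- The change of variables `(d, m) ↦ (m + d, m)`.
  let e : ℤ × ℤ ≃ ℤ × ℤ :=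
    { toFun := fun p => (p.2 + p.1, p.2)
      invFun := fun p => (p.1 - p.2, p.2)
      left_inv := fun p => by ext <;> simp
      right_inv := fun p => by ext <;> simp }
  have hAB' := e.summable_iff.2 hAB
  rw [← e.tsum_eq]
  refine (Summable.tsum_prod hAB').trans ((tsum_int_mod 3 hAB'.prod).trans ?_)
  have hW (r : ℤ) : (∑' b : ℤ, ∑' m : ℤ, ((-1) ^ (m + (b * 3 + r)) *
        q ^ (4 * (m + (b * 3 + r)) ^ 2 + -1 * (m + (b * 3 + r)))) *
      ((-1) ^ m * q ^ (8 * m ^ 2 + 6 * m))) =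
      (-1) ^ r * (∑' b : ℤ, (-1) ^ b * q ^ (24 * b ^ 2 + (16 * r - 8) * b)) *
        ∑' a : ℤ, q ^ (12 * a ^ 2 + (8 * r + 5) * a + (4 * r ^ 2 - r)) := by
    rw [← tsum_mul_left (a := (-1) ^ r), ← tsum_mul_right]
    refine tsum_congr fun b => ?_
    rw [← tsum_mul_left, ← (Equiv.subRight b).tsum_eq]
    exact tsum_congr fun a => quintuple_term hq0 a b r
  have hE := pentagonal_theorem (pow_ne_zero 8 hq0) (norm_pow_lt hq (a := 8) (by norm_num))
  have hE1 : (∑' b : ℤ, (-1) ^ b * q ^ (24 * b ^ 2 + (16 * 1 - 8) * b)) =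
      ∏' k : ℕ, (1 - (q ^ 16) ^ (k + 1)) := by
    rw [show q ^ 16 = (q ^ 8) ^ 2 by ring, hE]
    refine tsum_congr fun b => ?_
    rw [← zpow_natCast q 8, ← zpow_mul]
    congr 2
    push_cast
    ring
  have hE0 : (∑' b : ℤ, (-1) ^ b * q ^ (24 * b ^ 2 + (16 * 0 - 8) * b)) =
      ∏' k : ℕ, (1 - (q ^ 16) ^ (k + 1)) := by
    rw [← hE1, ← (Equiv.neg ℤ).tsum_eq]
    refine tsum_congr fun b => ?_
    simp only [Equiv.neg_apply, zpow_neg, ← inv_zpow, inv_neg, inv_one]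
    congr 2
    ring
  -- The third theta series is antisymmetric under `b ↦ -1 - b`.
  have hE2 : (∑' b : ℤ, (-1 : ℂ) ^ b * q ^ (24 * b ^ 2 + (16 * 2 - 8) * b)) = 0 := by
    rw [← self_eq_neg, ← tsum_neg, ← (Equiv.subLeft (-1 : ℤ)).tsum_eq]
    refine tsum_congr fun b => ?_
    have h1 : (-1 : ℂ) ^ (-1 - b) = -(-1) ^ b := by
      rw [zpow_sub₀ (by norm_num), div_eq_mul_inv, ← inv_zpow]
      norm_num
    rw [Equiv.subLeft_apply, h1, neg_mul]
    congr 3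
    ring
  have h0 := hW 0
  have h1 := hW 1
  have h2 := hW 2
  rw [hE0] at h0
  rw [hE1] at h1
  rw [hE2] at h2
  simp only [Fin.sum_univ_three, e, Equiv.coe_fn_mk, Function.comp_apply, Nat.cast_ofNat,
    Fin.val_zero, Fin.val_one, Fin.val_two, Nat.cast_zero, Nat.cast_one] at h0 h1 h2 ⊢
  rw [h0, h1, h2]
  norm_num
  ring

/-! ### The odd part of the pentagonal series -/

/-- Replacing `y` by `I * y` changes the sign of exactly those terms `y ^ (3j² + j)` for which the
pentagonal number `(3j² + j) / 2` is odd, that is `j ≡ 2, 3 mod 4`. -/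
lemma pentagonal_odd_part {y : ℂ} (hy0 : y ≠ 0) (hy : ‖y‖ < 1) :
    ∏' k : ℕ, (1 - ((Complex.I * y) ^ 2) ^ (k + 1)) - ∏' k : ℕ, (1 - (y ^ 2) ^ (k + 1)) =
      2 * y ^ 2 * ((∑' a : ℤ, (y ^ 4) ^ (12 * a ^ 2 + 5 * a)) -
        ∑' a : ℤ, (y ^ 4) ^ (12 * a ^ 2 + 13 * a + 3)) := by
  have hI0 := Complex.I_ne_zero
  have hIy0 : Complex.I * y ≠ 0 := mul_ne_zero hI0 hy0
  have hIy : ‖Complex.I * y‖ < 1 := by simpa using hy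
  have hs1 := (summable_theta_neg hIy0 hIy (a := 3) (by norm_num) 1).of_norm
  have hs2 := (summable_theta_neg hy0 hy (a := 3) (by norm_num) 1).of_norm
  simp only [Nat.cast_ofNat, one_mul] at hs1 hs2
  rw [pentagonal_theorem hIy0 hIy, pentagonal_theorem hy0 hy, ← hs1.tsum_sub hs2,
    tsum_int_mod 4 (hs1.sub hs2)]
  have hI (k : ℤ) (c : ℤ) : Complex.I ^ (4 * k + c) = Complex.I ^ c := by
    rw [zpow_add₀ hI0, zpow_mul]
    norm_cast
    simp
  have hm (b c : ℤ) : (-1 : ℂ) ^ (b * 4 + c) = (-1) ^ c := by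
    rw [show b * 4 + c = 2 * (2 * b) + c by ring, neg_one_zpow_add_two_mul]
  have h0 (b : ℤ) : (-1) ^ (b * 4 + 0) * (Complex.I * y) ^ (3 * (b * 4 + 0) ^ 2 + (b * 4 + 0)) -
      (-1) ^ (b * 4 + 0) * y ^ (3 * (b * 4 + 0) ^ 2 + (b * 4 + 0)) = 0 := by
    rw [mul_zpow, show 3 * (b * 4 + 0) ^ 2 + (b * 4 + 0) = 4 * (12 * b ^ 2 + b) + 0 by ring, hI]
    simp
  have h1 (b : ℤ) : (-1) ^ (b * 4 + 1) * (Complex.I * y) ^ (3 * (b * 4 + 1) ^ 2 + (b * 4 + 1)) -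
      (-1) ^ (b * 4 + 1) * y ^ (3 * (b * 4 + 1) ^ 2 + (b * 4 + 1)) = 0 := by
    rw [mul_zpow, show 3 * (b * 4 + 1) ^ 2 + (b * 4 + 1) = 4 * (12 * b ^ 2 + 7 * b + 1) + 0 by ring,
      hI]
    simp
  have hy4 (k : ℤ) : y ^ (4 * k + 2) = y ^ 2 * (y ^ 4) ^ k := by
    rw [zpow_add₀ hy0, zpow_mul, mul_comm]
    norm_cast
  have hI2 : Complex.I ^ (2 : ℤ) = -1 := by norm_cast; simp
  have h2 (b : ℤ) : (-1) ^ (b * 4 + 2) * (Complex.I * y) ^ (3 * (b * 4 + 2) ^ 2 + (b * 4 + 2)) -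
      (-1) ^ (b * 4 + 2) * y ^ (3 * (b * 4 + 2) ^ 2 + (b * 4 + 2)) =
      -2 * y ^ 2 * (y ^ 4) ^ (12 * b ^ 2 + 13 * b + 3) := by
    rw [mul_zpow, show 3 * (b * 4 + 2) ^ 2 + (b * 4 + 2) = 4 * (12 * b ^ 2 + 13 * b + 3) + 2 by ring,
      hI, hm, hy4, hI2]
    norm_num
    ring
  have h3 (b : ℤ) : (-1) ^ (b * 4 + 3) * (Complex.I * y) ^ (3 * (b * 4 + 3) ^ 2 + (b * 4 + 3)) -
      (-1) ^ (b * 4 + 3) * y ^ (3 * (b * 4 + 3) ^ 2 + (b * 4 + 3)) =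
      2 * y ^ 2 * (y ^ 4) ^ (12 * (-1 - b) ^ 2 + 5 * (-1 - b)) := by
    rw [mul_zpow, show 3 * (b * 4 + 3) ^ 2 + (b * 4 + 3) =
      4 * (12 * (-1 - b) ^ 2 + 5 * (-1 - b)) + 2 by ring, hI, hm, hy4, hI2,
      show (-1 : ℂ) ^ (3 : ℤ) = -1 by norm_cast]
    ring
  have h3' : ∑' b : ℤ, (y ^ 4) ^ (12 * (-1 - b) ^ 2 + 5 * (-1 - b)) =
      ∑' a : ℤ, (y ^ 4) ^ (12 * a ^ 2 + 5 * a) :=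
    (Equiv.subLeft (-1 : ℤ)).tsum_eq fun a : ℤ => (y ^ 4) ^ (12 * a ^ 2 + 5 * a)
  have c2 : (((2 : Fin 4) : ℕ) : ℤ) = 2 := rfl
  have c3 : (((3 : Fin 4) : ℕ) : ℤ) = 3 := rfl
  simp only [Fin.sum_univ_four, Nat.cast_ofNat, Fin.val_zero, Fin.val_one, c2, c3,
    Nat.cast_zero, Nat.cast_one, h0, h1, h2, h3, tsum_mul_left, tsum_zero, h3']
  ring

/-- `(w; w)_∞ = (w; w²)_∞ (w²; w²)_∞`. -/
lemma tprod_split_parity {w : ℂ} (hw : ‖w‖ < 1) :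
    ∏' k : ℕ, (1 - w ^ (k + 1)) =
      (∏' k : ℕ, (1 + -1 * w ^ (2 * k + 1))) * ∏' k : ℕ, (1 - (w ^ 2) ^ (k + 1)) := by
  rw [← tprod_even_mul_odd (f := fun k : ℕ => 1 - w ^ (k + 1))]
  · congr 1
    · exact tprod_congr fun k => by ring
    · exact tprod_congr fun k => by ring
  · exact (multipliable_theta hw (-1)).congr fun k => by ring
  · exact (multipliable_qP (norm_sq_lt hw)).congr fun k => by ring

/-- Comparing Euler's expansion at `z = 1` and `z = -1` isolates the terms of odd index. -/
lemma euler_odd_part {x : ℂ} (hx0 : x ≠ 0) (hx : ‖x‖ < 1) :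
    ∏' k : ℕ, (1 + 1 * x ^ (2 * k + 1)) - ∏' k : ℕ, (1 + -1 * x ^ (2 * k + 1)) =
      2 * x * ∑' n : ℕ, (x ^ 2) ^ (2 * n * (n + 1)) / qP (x ^ 2) (2 * n + 1) := by
  obtain ⟨s1, h1⟩ := euler_expansion hx0 hx one_ne_zero
  obtain ⟨s2, h2⟩ := euler_expansion hx0 hx (z := -1) (by norm_num)
  have s := s1.sub s2
  have se := s.comp_injective (mul_right_injective₀ (two_ne_zero (α := ℕ)))
  have so := s.comp_injective ((add_left_injective 1).comp
    (mul_right_injective₀ (two_ne_zero (α := ℕ))))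
  have h := tsum_even_add_odd (f := fun n : ℕ => x ^ (n ^ 2) * 1 ^ n / qP (x ^ 2) n -
    x ^ (n ^ 2) * (-1) ^ n / qP (x ^ 2) n) se so
  rw [h1, h2, ← s1.tsum_sub s2, ← tsum_mul_left, ← h]
  have he (k : ℕ) : x ^ ((2 * k) ^ 2) * 1 ^ (2 * k) / qP (x ^ 2) (2 * k) -
      x ^ ((2 * k) ^ 2) * (-1) ^ (2 * k) / qP (x ^ 2) (2 * k) = 0 := by
    simp [pow_mul]
  simp only [he, tsum_zero, zero_add]
  refine tsum_congr fun k => ?_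
  rw [pow_succ (-1 : ℂ), pow_mul (-1 : ℂ)]
  norm_num
  ring

/-! ### Slater's identity -/

/-- Slater's identity (86), analytic form for `‖q‖ < 1`. -/
theorem slater_identity (q : ℂ) (hq : ‖q‖ < 1) :
    (∏' k : ℕ, (1 - q ^ (k + 1))) *
        ∑' n : ℕ, q ^ (2 * n * (n + 1)) / ∏ k ∈ Finset.range (2 * n + 1), (1 - q ^ (k + 1)) =
      (∏' k : ℕ, (1 - q ^ 3 * (q ^ 8) ^ k)) * (∏' k : ℕ, (1 - q ^ 5 * (q ^ 8) ^ k)) *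
        (∏' k : ℕ, (1 - q ^ 8 * (q ^ 8) ^ k)) * (∏' k : ℕ, (1 - q ^ 2 * (q ^ 16) ^ k)) *
        (∏' k : ℕ, (1 - q ^ 14 * (q ^ 16) ^ k)) := by
  rcases eq_or_ne q 0 with rfl | hq0
  · rw [tsum_eq_single 0 fun n hn => by simp [hn]]
    simp
  obtain ⟨y, hy⟩ := IsAlgClosed.exists_pow_nat_eq q (n := 4) (by norm_num)
  have hy0 : y ≠ 0 := by rintro rfl; apply hq0; rw [← hy]; norm_num
  have hy1 : ‖y‖ < 1 := by
    by_contra h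
    have := one_le_pow₀ (not_lt.1 h) (n := 4)
    rw [← norm_pow, hy] at this
    linarith
  have hx := norm_sq_lt hy1
  have hx0 := pow_ne_zero 2 hy0
  have hxq : (y ^ 2) ^ 2 = q := by rw [← hy]; ring
  have hL : (∏' k : ℕ, (1 - q ^ (k + 1))) *
        ∑' n : ℕ, q ^ (2 * n * (n + 1)) / ∏ k ∈ Finset.range (2 * n + 1), (1 - q ^ (k + 1)) =
      (∑' a : ℤ, q ^ (12 * a ^ 2 + 5 * a)) - ∑' a : ℤ, q ^ (12 * a ^ 2 + 13 * a + 3) := by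
    have h1 := euler_odd_part hx0 hx
    have h2 := pentagonal_odd_part hy0 hy1
    have hIy : (Complex.I * y) ^ 2 = -(y ^ 2) := by rw [mul_pow, Complex.I_sq]; ring
    have h3 := tprod_split_parity hx
    have h4 := tprod_split_parity (w := -(y ^ 2)) (by rwa [norm_neg])
    have h5 (k : ℕ) : -1 * (-(y ^ 2)) ^ (2 * k + 1) = 1 * (y ^ 2) ^ (2 * k + 1) := by
      rw [Odd.neg_pow ⟨k, rfl⟩]; ring
    simp only [h5, neg_sq] at h4
    rw [hIy, h3, h4, ← sub_mul, h1, hxq, hy] at h2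
    apply mul_left_cancel₀ (mul_ne_zero two_ne_zero hx0)
    rw [← h2]
    simp only [qP]
    ring
  rw [hL]
  have hA := jacobi_neg hq0 hq (a := 4) (by norm_num) (-1)
  have hB := jacobi_neg hq0 hq (a := 8) (by norm_num) 6
  have hQ := theta_mul_theta hq0 hq
  have hE := tprod_qP_ne_zero (norm_pow_lt hq (a := 16) (by norm_num))
  simp only [Nat.cast_ofNat] at hA hB
  rw [← hA, ← hB] at hQ
  apply mul_left_cancel₀ hE
  rw [← hQ]
  have e1 : ∏' k : ℕ, (1 - q ^ (-1 : ℤ) * q ^ (4 * (2 * k + 1))) =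
      ∏' k : ℕ, (1 - q ^ 3 * (q ^ 8) ^ k) :=
    tprod_congr fun k => by rw [zpow_neg, zpow_one]; field_simp; ring
  have e2 : ∏' k : ℕ, (1 - q ^ (- -1 : ℤ) * q ^ (4 * (2 * k + 1))) =
      ∏' k : ℕ, (1 - q ^ 5 * (q ^ 8) ^ k) :=
    tprod_congr fun k => by rw [neg_neg, zpow_one]; ring
  have e3 : ∏' k : ℕ, (1 - (q ^ (2 * 4)) ^ (k + 1)) = ∏' k : ℕ, (1 - q ^ 8 * (q ^ 8) ^ k) :=
    tprod_congr fun k => by ring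
  have e4 : ∏' k : ℕ, (1 - q ^ (6 : ℤ) * q ^ (8 * (2 * k + 1))) =
      ∏' k : ℕ, (1 - q ^ 14 * (q ^ 16) ^ k) :=
    tprod_congr fun k => by rw [show q ^ (6 : ℤ) = q ^ 6 from zpow_natCast q 6]; ring
  have e5 : ∏' k : ℕ, (1 - q ^ (-6 : ℤ) * q ^ (8 * (2 * k + 1))) =
      ∏' k : ℕ, (1 - q ^ 2 * (q ^ 16) ^ k) :=
    tprod_congr fun k => by
      rw [zpow_neg, show q ^ (6 : ℤ) = q ^ 6 from zpow_natCast q 6]; field_simp; ring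
  rw [e1, e2, e3, e4, e5]
  norm_num
  ring
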